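/- Assume ℓ(C) = 2 with f_1 = x and f_2 = y (so e_1 = e_2 = 1 and e_j ≥ 2 for j ≥ 3). Let φ : S^m → S³ be the S-linear map φ(A_1,...,A_{m−1},c) = Σ_{j=1}^{m−1} A_j ρ_j + c σ^z. Then the kernel of φ is a free S-module with basis R_3,...,R_m, where for 3 ≤ j ≤ m−1 the vector R_j ∈ S^m has −x·f_{j,x} in position 1, −y·f_{j,y} in position 2, f_j in position j, zero in the other positions among the first m−1, and −f_{j,z} in the last position, and R_m has −f_m − x·f_{m,x} in position 1, −f_m − y·f_{m,y} in position 2, −f_m in positions 3 through m−1, and −f_{m,z} in the last position. That is, ker φ equals the S-submodule generated by R_3,...,R_m, and R_3,...,R_m are linearly independent over S. -/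

import Mathlib

open MvPolynomial

noncomputable abbrev S : Type := MvPolynomial (Fin 3) ℂ

/-- The gradient `∇g = (g_x, g_y, g_z)` of a polynomial `g ∈ S = ℂ[x,y,z]`. -/
noncomputable def grad (g : S) : Fin 3 → S := fun t => pderiv t g

/-- The syzygy triple `ρ_j = Σ_{i≠j} (∏_{k≠i,j} f_k) (∇f_i × ∇f_j)`
of the 2-form `ω_j = df ∧ df_j/f_j`. -/
noncomputable def rho {m : ℕ} (F : Fin m → S) (j : Fin m) : Fin 3 → S :=
  ∑ i ∈ Finset.univ.erase j,
    (∏ k ∈ (Finset.univ.erase j).erase i, F k) • crossProduct (grad (F i)) (grad (F j))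

/-- The Jacobian syzygy module `D₀(f) = {(a,b,c) ∈ S³ : a f_x + b f_y + c f_z = 0}`. -/
noncomputable def D0 (f : S) : Submodule S (Fin 3 → S) where
  carrier := {v | ∑ t, v t * pderiv t f = 0}
  add_mem' {a b} ha hb := by
    simp only [Set.mem_setOf_eq, Pi.add_apply, add_mul, Finset.sum_add_distrib] at *
    rw [ha, hb, add_zero]
  zero_mem' := by simp
  smul_mem' c v hv := by
    simp only [Set.mem_setOf_eq, Pi.smul_apply, smul_eq_mul, mul_assoc, ← Finset.mul_sum] at *
    rw [hv, mul_zero]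

/-- The syzygy triple `σ^x = (0, f_z, −f_y)` of the 2-form `df ∧ dx`. -/
noncomputable def sigx (f : S) : Fin 3 → S := ![0, pderiv 2 f, -pderiv 1 f]
/-- The syzygy triple `σ^y = (−f_z, 0, f_x)` of the 2-form `df ∧ dy`. -/
noncomputable def sigy (f : S) : Fin 3 → S := ![-pderiv 2 f, 0, pderiv 0 f]
/-- The syzygy triple `σ^z = (f_y, −f_x, 0)` of the 2-form `df ∧ dz`. -/
noncomputable def sigz (f : S) : Fin 3 → S := ![pderiv 1 f, -pderiv 0 f, 0]

/-- The second-syzygy vectors `R_3, …, R_m ∈ S^m` (case `ℓ(C) = 2`, `f_1 = x`, `f_2 = y`);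
the index `a : Fin (m−2)` corresponds to `R_{a+3}`. For `3 ≤ j ≤ m−1`, `R_j` has
`−x f_{j,x}` in position 1, `−y f_{j,y}` in position 2, `f_j` in position `j`, zeros
elsewhere among the first `m−1` coordinates and `−f_{j,z}` in the last position; `R_m` has
`−f_m − x f_{m,x}` in position 1, `−f_m − y f_{m,y}` in position 2, `−f_m` in positions
3,…,m−1 and `−f_{m,z}` in the last position. -/
noncomputable def Rvec2 {m : ℕ} (F : Fin m → S) (a : Fin (m - 2)) : (Fin (m - 1) ⊕ Fin 1) → S :=
  let j : Fin m := ⟨(a : ℕ) + 2, by have := a.isLt; omega⟩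
  Sum.elim
    (fun k => (if (k : ℕ) = 0 then -(X 0 * pderiv 0 (F j)) else 0)
      + (if (k : ℕ) = 1 then -(X 1 * pderiv 1 (F j)) else 0)
      + (if (k : ℕ) = (j : ℕ) then F j else 0)
      + (if (j : ℕ) = m - 1 then -F j else 0))
    (fun _ => -pderiv 2 (F j))

/-!
Put `f = f_1 ⋯ f_m` and let `W` be `f` times the logarithmic form `∑ A_j df_j / f_j + c dz`. Then
`f · (∑ A_j ρ_j + c σ^z) = ∇f × W`. Smoothness and normal crossings make `f` squarefree, so by
Euler's identity its partial derivatives have no common factor, and `∇f × W = 0` forces `W = h ∇f`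
for some `h`. Reduction modulo `f_j` gives `A_j = h + f_j B_j`, after which `W = h ∇f` says
`∑ B_j df_j + c dz = 0`. Since `A_m = 0`, also `h = -f_m B_m`.

For `f_1 = x` and `f_2 = y` such relations are freely parametrised by `B_3, …, B_m`, and `R_j` is
the kernel element coming from `df_j = f_{j,x} dx + f_{j,y} dy + f_{j,z} dz`. No nonzero relation
is lost: if all `A_j` and `c` vanish, then `h ∇f = 0`, so `h = 0` and every `B_j = 0`.
-/

open scoped Matrix

section RelPrimeFamily

/-- A family is relatively prime if its only common divisors are units: the analogue of `IsRelPrime`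
for families of any size. For the gradient of `f` it says that `f` has no multiple factor
(for `f` homogeneous of positive degree, in characteristic zero). -/
def IsRelPrimeFamily {ι R : Type*} [Monoid R] (u : ι → R) : Prop :=
  ∀ ⦃q : R⦄, (∀ t, q ∣ u t) → IsUnit q

namespace IsRelPrimeFamily

variable {ι R : Type*}

lemma exists_ne_zero [MonoidWithZero R] [Nontrivial R] {u : ι → R} (hu : IsRelPrimeFamily u) :
    ∃ t, u t ≠ 0 := by
  by_contra! h
  exact not_isUnit_zero (hu fun t => (h t).symm ▸ dvd_rfl)

variable [CommMonoidWithZero R] [UniqueFactorizationMonoid R] {u : ι → R}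

lemma dvd_of_forall_dvd_mul (hu : IsRelPrimeFamily u) {a v : R} (h : ∀ t, a ∣ u t * v) :
    a ∣ v := by
  obtain rfl | hv := eq_or_ne v 0
  · exact dvd_zero a
  obtain ⟨a', v', g, hrel, rfl, rfl⟩ := UniqueFactorizationMonoid.exists_reduced_factors' a v hv
  have ha' : IsUnit a' := hu fun t => by
    have : g * a' ∣ g * (u t * v') := mul_left_comm g (u t) v' ▸ h t
    exact hrel.dvd_of_dvd_mul_right ((mul_dvd_mul_iff_left (left_ne_zero_of_mul hv)).1 this)
  exact mul_dvd_mul_left g ha'.dvd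

lemma exists_eq_smul [Nontrivial R] (hu : IsRelPrimeFamily u) {w : ι → R}
    (h : ∀ s t, u s * w t = u t * w s) : ∃ r : R, w = r • u := by
  obtain ⟨s, hs⟩ := hu.exists_ne_zero
  obtain ⟨r, hr⟩ : u s ∣ w s := hu.dvd_of_forall_dvd_mul fun t => ⟨w t, (h s t).symm⟩
  refine ⟨r, funext fun t => mul_left_cancel₀ hs ?_⟩
  calc u s * w t = u t * (u s * r) := by rw [h, hr]
    _ = u s * (r * u t) := by rw [mul_left_comm, mul_comm r]

end IsRelPrimeFamily

end RelPrimeFamily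

section CrossProduct

variable {R : Type*} [CommRing R]

lemma mul_eq_mul_of_cross_eq_zero {u w : Fin 3 → R} (h : u ⨯₃ w = 0) (s t : Fin 3) :
    u s * w t = u t * w s := by
  have h12 : u 1 * w 2 - u 2 * w 1 = 0 := congrFun h 0
  have h20 : u 2 * w 0 - u 0 * w 2 = 0 := congrFun h 1
  have h01 : u 0 * w 1 - u 1 * w 0 = 0 := congrFun h 2
  fin_cases s <;> fin_cases t <;> dsimp only [Fin.reduceFinMk, Fin.zero_eta, Fin.mk_one] <;> grind

lemma IsRelPrimeFamily.exists_eq_smul_of_cross_eq_zero [IsDomain R] [UniqueFactorizationMonoid R]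
    {u w : Fin 3 → R} (hu : IsRelPrimeFamily u) (h : u ⨯₃ w = 0) : ∃ r : R, w = r • u :=
  hu.exists_eq_smul (mul_eq_mul_of_cross_eq_zero h)

end CrossProduct

section PartialDerivatives

variable {σ : Type*}

lemma totalDegree_pderiv_lt {R : Type*} [CommSemiring R] {p : MvPolynomial σ R} {i : σ}
    (h : pderiv i p ≠ 0) : (pderiv i p).totalDegree < p.totalDegree := by
  obtain ⟨n, hn, hdeg⟩ := (pderiv i p).support.exists_mem_eq_sup (support_nonempty.2 h)
    fun s => s.sum fun _ e => e
  have hmem : n + Finsupp.single i 1 ∈ p.support := by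
    rw [mem_support_iff, coeff_pderiv] at hn
    exact mem_support_iff.2 (left_ne_zero_of_mul hn)
  calc (pderiv i p).totalDegree = n.sum fun _ e => e := hdeg
    _ < (n + Finsupp.single i 1).sum fun _ e => e := by
      classical
      rw [Finsupp.sum_add_index' (fun _ => rfl) (fun _ _ _ => rfl),
        Finsupp.sum_single_index rfl]
      exact Nat.lt_succ_self _
    _ ≤ p.totalDegree := le_totalDegree hmem

lemma eq_C_of_pderiv_eq_zero {R : Type*} [CommRing R] [IsDomain R] [CharZero R]
    {p : MvPolynomial σ R} (h : ∀ i, pderiv i p = 0) : p = C (coeff 0 p) := by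
  classical
  ext n
  rw [coeff_C]
  split_ifs with hn
  · rw [hn]
  obtain ⟨i, hi⟩ := Finsupp.ne_iff.1 (Ne.symm hn)
  have hle : Finsupp.single i 1 ≤ n := Finsupp.single_le_iff.2 (Nat.one_le_iff_ne_zero.2 hi)
  have hcoeff := coeff_pderiv p (i := i) (n - Finsupp.single i 1)
  rw [h i, coeff_zero, tsub_add_cancel_of_le hle, zero_eq_mul] at hcoeff
  exact hcoeff.resolve_right (Nat.cast_add_one_ne_zero _)

variable {K : Type*} [Field K]

lemma isUnit_of_forall_dvd_pderiv [CharZero K] {q : MvPolynomial σ K} (hq : q ≠ 0)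
    (h : ∀ t, q ∣ pderiv t q) : IsUnit q := by
  have hconst : q = C (coeff 0 q) := eq_C_of_pderiv_eq_zero fun t => by
    by_contra ht
    exact (totalDegree_pderiv_lt ht).not_ge (totalDegree_le_of_dvd_of_isDomain (h t) ht)
  have hcoeff : coeff 0 q ≠ 0 := fun h0 => hq (by rw [hconst, h0, C_0])
  exact hconst ▸ hcoeff.isUnit.map C

lemma isUnit_of_squarefree_of_dvd_of_dvd_pderiv [CharZero K] {f q : MvPolynomial σ K}
    (hf : Squarefree f) (hqf : q ∣ f) (hq : ∀ t, q ∣ pderiv t f) : IsUnit q := by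
  obtain ⟨g, rfl⟩ := hqf
  refine isUnit_of_forall_dvd_pderiv (left_ne_zero_of_mul hf.ne_zero) fun t => ?_
  have hdvd : q ∣ pderiv t q * g := by
    simpa only [pderiv_mul, dvd_add_left (dvd_mul_right q _)] using hq t
  exact (IsRelPrime.of_squarefree_mul hf).dvd_of_dvd_mul_right hdvd

lemma isRelPrimeFamily_pderiv [CharZero K] [Finite σ] {f : MvPolynomial σ K} {d : ℕ}
    (hf : Squarefree f) (hhom : f.IsHomogeneous d) (hd : d ≠ 0) :
    IsRelPrimeFamily fun t => pderiv t f := by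
  have := Fintype.ofFinite σ
  intro q hq
  have hEuler : q ∣ C (d : K) * f := by
    rw [map_natCast, ← nsmul_eq_mul, ← hhom.sum_X_mul_pderiv]
    exact Finset.dvd_sum fun t _ => (hq t).mul_left _
  have hunit : IsUnit (C (d : K) : MvPolynomial σ K) :=
    (isUnit_iff_ne_zero.2 (Nat.cast_ne_zero.2 hd)).map C
  exact isUnit_of_squarefree_of_dvd_of_dvd_pderiv hf (hunit.dvd_mul_left.1 hEuler) hq

end PartialDerivatives

section Nullstellensatz

variable {K σ : Type*} [Field K] [IsAlgClosed K] [Finite σ] [Nontrivial σ]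

lemma exists_ne_zero_eval_eq_zero {q : MvPolynomial σ K} (hq : ¬IsUnit q) :
    ∃ p : σ → K, p ≠ 0 ∧ eval p q = 0 := by
  by_contra! h
  have hX (i : σ) : ∃ n : ℕ, q ∣ X i ^ n := by
    simp_rw [← Ideal.mem_span_singleton, ← Ideal.mem_radical_iff]
    rw [← vanishingIdeal_zeroLocus_eq_radical (K := K), mem_vanishingIdeal_iff]
    intro p hp
    have hpq : eval p q = 0 := hp q (Ideal.mem_span_singleton_self q)
    simp [not_imp_not.1 (h p) hpq]
  obtain ⟨i, j, hij⟩ := exists_pair_ne σ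
  have hrel : IsRelPrime (X i : MvPolynomial σ K) (X j) :=
    X_prime.irreducible.isRelPrime_iff_not_dvd.2 (by rwa [X_dvd_X])
  obtain ⟨a, ha⟩ := hX i
  obtain ⟨b, hb⟩ := hX j
  exact hq (hrel.pow ha hb)

lemma squarefree_of_smooth {f : MvPolynomial σ K}
    (hsmooth : ∀ p : σ → K, (∀ t, eval p (pderiv t f) = 0) → p = 0) : Squarefree f := by
  rintro q ⟨g, rfl⟩
  by_contra hq
  obtain ⟨p, hp, hpq⟩ := exists_ne_zero_eval_eq_zero hq
  exact hp (hsmooth p fun t => by simp [hpq])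

lemma isRelPrime_of_normalCrossing {f g : MvPolynomial σ K}
    (hnc : ∀ p : σ → K, p ≠ 0 → eval p f = 0 → eval p g = 0 →
      LinearIndependent K ![fun t => eval p (pderiv t f), fun t => eval p (pderiv t g)]) :
    IsRelPrime f g := by
  rintro q ⟨a, rfl⟩ ⟨b, rfl⟩
  by_contra hq
  obtain ⟨p, hp, hpq⟩ := exists_ne_zero_eval_eq_zero hq
  have hgrad (c : MvPolynomial σ K) :
      (fun t => eval p (pderiv t (q * c))) = eval p c • fun t => eval p (pderiv t q) :=
    funext fun t => by simp [hpq]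
  have hind := hnc p hp (by simp [hpq]) (by simp [hpq])
  simp only [hgrad] at hind
  have hb : eval p b = 0 :=
    (LinearIndependent.pair_iff.1 hind (eval p b) (-eval p a)
      (by rw [smul_smul, smul_smul, ← add_smul]; simp [mul_comm])).1
  exact hind.ne_zero 1 (by simp [hb])

lemma squarefree_prod_of_smooth_of_normalCrossing {ι : Type*} [Fintype ι]
    {F : ι → MvPolynomial σ K}
    (hsmooth : ∀ j, ∀ p : σ → K, (∀ t, eval p (pderiv t (F j)) = 0) → p = 0)
    (hnc : ∀ i j, i ≠ j → ∀ p : σ → K, p ≠ 0 → eval p (F i) = 0 → eval p (F j) = 0 →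
      LinearIndependent K
        ![fun t => eval p (pderiv t (F i)), fun t => eval p (pderiv t (F j))]) :
    Squarefree (∏ i, F i) :=
  Finset.squarefree_prod_of_pairwise_isCoprime
    (fun i _ j _ hij => isRelPrime_of_normalCrossing (hnc i j hij))
    fun j _ => squarefree_of_smooth (hsmooth j)

end Nullstellensatz

section LogForms

lemma derivation_finset_prod {R A M ι : Type*} [CommSemiring R] [CommSemiring A] [Algebra R A]
    [AddCommMonoid M] [Module A M] [Module R M] [DecidableEq ι] (D : Derivation R A M)
    (s : Finset ι) (f : ι → A) :
    D (∏ i ∈ s, f i) = ∑ i ∈ s, (∏ k ∈ s.erase i, f k) • D (f i) := by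
  induction s using Finset.induction_on with
  | empty => simp
  | insert a s ha ih =>
    have hsum : ∑ i ∈ s, (∏ k ∈ (insert a s).erase i, f k) • D (f i) =
        f a • ∑ i ∈ s, (∏ k ∈ s.erase i, f k) • D (f i) := by
      rw [Finset.smul_sum]
      refine Finset.sum_congr rfl fun i hi => ?_
      rw [Finset.erase_insert_of_ne (ne_of_mem_of_not_mem hi ha).symm,
        Finset.prod_insert (by simp [ha]), mul_smul]
    rw [Finset.prod_insert ha, D.leibniz, ih, Finset.sum_insert ha, Finset.erase_insert ha, hsum,
      add_comm]

variable {m : ℕ} (F : Fin m → S)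

/-- The cofactor `∏_{k ≠ j} f_k = f / f_j` of `f_j` in `f = f_1 ⋯ f_m`. -/
noncomputable def cofactor (j : Fin m) : S := ∏ k ∈ Finset.univ.erase j, F k

lemma mul_cofactor (j : Fin m) : F j * cofactor F j = ∏ i, F i :=
  Finset.mul_prod_erase _ _ (Finset.mem_univ j)

lemma dvd_cofactor {i j : Fin m} (h : i ≠ j) : F j ∣ cofactor F i :=
  Finset.dvd_prod_of_mem _ (by simp [h.symm])

lemma grad_prod : grad (∏ i, F i) = ∑ i, cofactor F i • grad (F i) := by
  ext1 t
  simp [grad, cofactor, derivation_finset_prod, Finset.sum_apply]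

lemma smul_rho (j : Fin m) : F j • rho F j = grad (∏ i, F i) ⨯₃ grad (F j) := by
  rw [grad_prod, map_sum, LinearMap.sum_apply, rho, Finset.smul_sum,
    ← Finset.add_sum_erase _ _ (Finset.mem_univ j), map_smul, LinearMap.smul_apply, cross_self,
    smul_zero, zero_add]
  refine Finset.sum_congr rfl fun i hi => ?_
  have hji : j ∈ Finset.univ.erase i := by simp [(Finset.ne_of_mem_erase hi).symm]
  rw [map_smul, LinearMap.smul_apply, smul_smul, cofactor, Finset.erase_right_comm,
    Finset.mul_prod_erase _ _ hji]

/-- The polynomial `1`-form `f · (∑ a_j df_j / f_j + w)`, written as a triple. -/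
noncomputable def logForm (a : Fin m → S) (w : Fin 3 → S) : Fin 3 → S :=
  ∑ j, (a j * cofactor F j) • grad (F j) + (∏ i, F i) • w

lemma prod_smul_sum_rho_add_cross (a : Fin m → S) (w : Fin 3 → S) :
    (∏ i, F i) • (∑ j, a j • rho F j + grad (∏ i, F i) ⨯₃ w) =
      grad (∏ i, F i) ⨯₃ logForm F a w := by
  rw [logForm, map_add, map_sum, smul_add, Finset.smul_sum, map_smul]
  congr! 2 with j
  rw [map_smul, ← smul_rho, smul_smul, smul_smul, ← mul_cofactor F j]
  congr 1
  ring

variable {F}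

lemma logForm_of_eq_add_mul {a B : Fin m → S} {h : S} (hB : ∀ j, a j = h + F j * B j)
    (w : Fin 3 → S) :
    logForm F a w =
      h • grad (∏ i, F i) + (∏ i, F i) • (∑ j, B j • grad (F j) + w) := by
  rw [logForm, grad_prod, smul_add, Finset.smul_sum, Finset.smul_sum, ← add_assoc,
    ← Finset.sum_add_distrib]
  congr! 2 with j
  rw [smul_smul, smul_smul, ← add_smul, hB j, ← mul_cofactor F j]
  congr 1
  ring

variable (F) in
lemma dvd_logForm_sub (a : Fin m → S) (w : Fin 3 → S) (j : Fin m) (t : Fin 3) :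
    F j ∣ logForm F a w t - a j * grad (∏ i, F i) t := by
  have hexpand : logForm F a w t - a j * grad (∏ i, F i) t =
      ∑ i, (a i - a j) * cofactor F i * grad (F i) t + (∏ i, F i) * w t := by
    simp only [logForm, grad_prod, Pi.add_apply, Finset.sum_apply, Pi.smul_apply, smul_eq_mul,
      sub_mul, Finset.sum_sub_distrib, Finset.mul_sum, mul_assoc]
    ring
  rw [hexpand]
  refine dvd_add (Finset.dvd_sum fun i _ => ?_)
    ((Finset.dvd_prod_of_mem F (Finset.mem_univ j)).mul_right _)
  obtain rfl | hij := eq_or_ne i j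
  · simp
  · exact ((dvd_cofactor F hij).mul_left _).mul_right _

lemma prod_ne_zero_of_isRelPrimeFamily_grad (hu : IsRelPrimeFamily (grad (∏ i, F i))) :
    ∏ i, F i ≠ 0 := by
  intro h
  obtain ⟨t, ht⟩ := hu.exists_ne_zero
  exact ht (by simp [h, grad])

lemma sum_smul_rho_add_cross_eq_zero_iff (hu : IsRelPrimeFamily (grad (∏ i, F i)))
    {a : Fin m → S} {w : Fin 3 → S} :
    ∑ j, a j • rho F j + grad (∏ i, F i) ⨯₃ w = 0 ↔
      ∃ (h : S) (B : Fin m → S), (∀ j, a j = h + F j * B j) ∧ ∑ j, B j • grad (F j) + w = 0 := by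
  have hf := prod_ne_zero_of_isRelPrimeFamily_grad hu
  constructor
  · intro hker
    obtain ⟨h, hW⟩ := hu.exists_eq_smul_of_cross_eq_zero (w := logForm F a w)
      (by rw [← prod_smul_sum_rho_add_cross, hker, smul_zero])
    have hdvd (j : Fin m) : F j ∣ a j - h := by
      refine hu.dvd_of_forall_dvd_mul fun t => ?_
      have ht := dvd_logForm_sub F a w j t
      rwa [dvd_sub_comm, hW, Pi.smul_apply, smul_eq_mul, ← sub_mul, mul_comm] at ht
    choose B hB using hdvd
    have hB' (j : Fin m) : a j = h + F j * B j := by rw [← hB j, add_sub_cancel]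
    rw [logForm_of_eq_add_mul hB', add_eq_left] at hW
    exact ⟨h, B, hB', (smul_eq_zero.1 hW).resolve_left hf⟩
  · rintro ⟨h, B, hB, hrel⟩
    have hcross := prod_smul_sum_rho_add_cross F a w
    rw [logForm_of_eq_add_mul hB, hrel, smul_zero, add_zero, map_smul, cross_self,
      smul_zero] at hcross
    exact (smul_eq_zero.1 hcross).resolve_left hf

lemma eq_zero_of_sum_smul_grad_eq_zero (hu : IsRelPrimeFamily (grad (∏ i, F i)))
    {B : Fin m → S} {g : S} (hB : ∀ j, F j * B j = g) (h : ∑ j, B j • grad (F j) = 0) :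
    B = 0 := by
  have hg : g = 0 := by
    obtain ⟨t, ht⟩ := hu.exists_ne_zero
    have hlog := logForm_of_eq_add_mul (F := F) (a := 0) (B := B) (h := -g) (by simp [hB]) 0
    have hzero : -g * grad (∏ i, F i) t = 0 := by
      simpa [h, logForm] using (congrFun hlog t).symm
    exact neg_eq_zero.1 ((mul_eq_zero.1 hzero).resolve_right ht)
  ext1 j
  have hF : F j ≠ 0 :=
    Finset.prod_ne_zero_iff.1 (prod_ne_zero_of_isRelPrimeFamily_grad hu) j (Finset.mem_univ j)
  exact (mul_eq_zero.1 ((hB j).trans hg)).resolve_left hF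

end LogForms

section TwoLines

lemma sum_castSucc_smul_rho_add_cross_eq_zero_iff {n : ℕ} {F : Fin (n + 1) → S}
    (hu : IsRelPrimeFamily (grad (∏ i, F i))) {a : Fin n → S} {w : Fin 3 → S} :
    ∑ j, a j • rho F j.castSucc + grad (∏ i, F i) ⨯₃ w = 0 ↔
      ∃ B : Fin (n + 1) → S, ∑ j, B j • grad (F j) + w = 0 ∧
        ∀ k, a k = F k.castSucc * B k.castSucc - F (Fin.last n) * B (Fin.last n) := by
  have hsum : ∑ j, a j • rho F j.castSucc =
      ∑ j, (Fin.snoc a 0 : Fin (n + 1) → S) j • rho F j := by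
    simp [Fin.sum_univ_castSucc]
  rw [hsum, sum_smul_rho_add_cross_eq_zero_iff hu]
  simp only [Fin.forall_fin_succ', Fin.snoc_castSucc, Fin.snoc_last]
  constructor
  · rintro ⟨h, B, ⟨ha, hlast⟩, hrel⟩
    exact ⟨B, hrel, fun k => by rw [ha k]; linear_combination -hlast⟩
  · rintro ⟨B, hrel, ha⟩
    exact ⟨-(F (Fin.last n) * B (Fin.last n)), B, ⟨fun k => by rw [ha k]; ring, by ring⟩, hrel⟩

variable {n : ℕ} (F : Fin (n + 2) → S)

/-- For `f_1 = x` and `f_2 = y`, the coefficients in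
`df_j - f_{j,x} df_1 - f_{j,y} df_2 = f_{j,z} dz`, where `j = a + 3` in the paper's numbering. -/
noncomputable def gradRelation (a : Fin n) : Fin (n + 2) → S :=
  Fin.cons (-pderiv 0 (F a.succ.succ)) (Fin.cons (-pderiv 1 (F a.succ.succ)) (Pi.single a 1))

variable {F}

lemma eq_sum_smul_gradRelation_iff {B : Fin (n + 2) → S} {b : Fin n → S} :
    B = ∑ a, b a • gradRelation F a ↔
      B 0 = -∑ a, b a * pderiv 0 (F a.succ.succ) ∧
      B 1 = -∑ a, b a * pderiv 1 (F a.succ.succ) ∧ ∀ a : Fin n, B a.succ.succ = b a := by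
  rw [funext_iff, Fin.forall_fin_succ, Fin.forall_fin_succ]
  simp [gradRelation, Finset.sum_apply, Pi.single_apply]

lemma sum_smul_grad_add_smul_eq_zero_iff (hx : F 0 = X 0) (hy : F 1 = X 1)
    {B : Fin (n + 2) → S} {c : S} :
    ∑ j, B j • grad (F j) + c • ![0, 0, 1] = 0 ↔
      ∃ b : Fin n → S, B = ∑ a, b a • gradRelation F a ∧
        c = -∑ a, b a * pderiv 2 (F a.succ.succ) := by
  have hcomponents : ∑ j, B j • grad (F j) + c • ![0, 0, 1] = 0 ↔
      B 0 = -∑ a : Fin n, B a.succ.succ * pderiv 0 (F a.succ.succ) ∧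
      B 1 = -∑ a : Fin n, B a.succ.succ * pderiv 1 (F a.succ.succ) ∧
      c = -∑ a : Fin n, B a.succ.succ * pderiv 2 (F a.succ.succ) := by
    rw [funext_iff, Fin.forall_fin_succ, Fin.forall_fin_succ]
    simp [Fin.sum_univ_succ, hx, hy, grad, Finset.sum_apply, pderiv_X, eq_neg_iff_add_eq_zero,
      add_comm]
  rw [hcomponents]
  constructor
  · rintro ⟨h0, h1, hc⟩
    exact ⟨fun a => B a.succ.succ, eq_sum_smul_gradRelation_iff.2 ⟨h0, h1, fun _ => rfl⟩, hc⟩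
  · rintro ⟨b, hB, hc⟩
    obtain ⟨h0, h1, hb⟩ := eq_sum_smul_gradRelation_iff.1 hB
    simp only [hb]
    exact ⟨h0, h1, hc⟩

lemma mul_gradRelation (hx : F 0 = X 0) (hy : F 1 = X 1) (a : Fin n) (j : Fin (n + 2)) :
    F j * gradRelation F a j =
      (if (j : ℕ) = 0 then -(X 0 * pderiv 0 (F a.succ.succ)) else 0) +
      (if (j : ℕ) = 1 then -(X 1 * pderiv 1 (F a.succ.succ)) else 0) +
      (if (j : ℕ) = (a : ℕ) + 2 then F a.succ.succ else 0) := by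
  revert j
  rw [Fin.forall_fin_succ, Fin.forall_fin_succ]
  refine ⟨by simp [gradRelation, hx], by simp [gradRelation, hy], fun i => ?_⟩
  obtain rfl | hia := eq_or_ne i a
  · simp [gradRelation]
  · simp [gradRelation, hia, Fin.val_ne_of_ne hia]

lemma Rvec2_inl (hx : F 0 = X 0) (hy : F 1 = X 1) (a : Fin n) (k : Fin (n + 1)) :
    Rvec2 (m := n + 2) F a (Sum.inl k) =
      F k.castSucc * gradRelation F a k.castSucc -
        F (Fin.last (n + 1)) * gradRelation F a (Fin.last (n + 1)) := by
  have hn : n ≠ 0 := (Fin.pos a).ne'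
  have hlast : F (Fin.last (n + 1)) * gradRelation F a (Fin.last (n + 1)) =
      if (a : ℕ) + 2 = n + 1 then F a.succ.succ else 0 := by
    simp [mul_gradRelation hx hy, hn, eq_comm]
  rw [hlast, mul_gradRelation hx hy, sub_eq_add_neg, neg_ite, neg_zero]
  rfl

lemma Rvec2_inr (a : Fin n) (k : Fin 1) :
    Rvec2 (m := n + 2) F a (Sum.inr k : Fin (n + 1) ⊕ Fin 1) = -pderiv 2 (F a.succ.succ) := rfl

lemma sum_smul_Rvec2 (hx : F 0 = X 0) (hy : F 1 = X 1) (b : Fin n → S) :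
    ∑ a : Fin n, b a • Rvec2 (m := n + 2) F a =
      Sum.elim
        (fun k : Fin (n + 1) => F k.castSucc * (∑ a, b a • gradRelation F a) k.castSucc -
          F (Fin.last (n + 1)) * (∑ a, b a • gradRelation F a) (Fin.last (n + 1)))
        (fun _ => -∑ a, b a * pderiv 2 (F a.succ.succ)) := by
  ext1 k
  cases k with
  | inl k =>
    simp only [Finset.sum_apply, Pi.smul_apply, smul_eq_mul, Rvec2_inl hx hy, Sum.elim_inl,
      Finset.mul_sum, ← Finset.sum_sub_distrib]
    exact Finset.sum_congr rfl fun a _ => by ring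
  | inr k => simp [Rvec2_inr, Finset.sum_apply]

lemma mem_span_range_Rvec2_iff (hx : F 0 = X 0) (hy : F 1 = X 1) {A : Fin (n + 1) ⊕ Fin 1 → S} :
    A ∈ Submodule.span S (Set.range (Rvec2 (m := n + 2) F)) ↔
      ∃ B : Fin (n + 2) → S, ∑ j, B j • grad (F j) + A (Sum.inr 0) • ![0, 0, 1] = 0 ∧
        ∀ k, A (Sum.inl k) =
          F k.castSucc * B k.castSucc - F (Fin.last (n + 1)) * B (Fin.last (n + 1)) := by
  simp only [sum_smul_grad_add_smul_eq_zero_iff hx hy]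
  calc A ∈ Submodule.span S (Set.range (Rvec2 (m := n + 2) F)) ↔
        ∃ b : Fin n → S, ∑ a : Fin n, b a • Rvec2 (m := n + 2) F a = A :=
      Submodule.mem_span_range_iff_exists_fun S
    _ ↔ _ := by
      simp only [sum_smul_Rvec2 hx hy, funext_iff, Sum.forall, Fin.forall_fin_one, Sum.elim_inl,
        Sum.elim_inr]
      constructor
      · rintro ⟨b, hinl, hinr⟩
        exact ⟨_, ⟨b, fun _ => rfl, hinr.symm⟩, fun k => (hinl k).symm⟩
      · rintro ⟨B, ⟨b, hB, hinr⟩, hinl⟩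
        obtain rfl : B = _ := funext hB
        exact ⟨b, fun k => (hinl k).symm, hinr.symm⟩

lemma linearIndependent_Rvec2 (hu : IsRelPrimeFamily (grad (∏ i, F i)))
    (hx : F 0 = X 0) (hy : F 1 = X 1) : LinearIndependent S (Rvec2 (m := n + 2) F) := by
  refine Fintype.linearIndependent_iff.2 fun (b : Fin n → S) hb => ?_
  set B := ∑ a, b a • gradRelation F a with hB
  have hzero := (sum_smul_Rvec2 hx hy b).symm.trans hb
  have hinr : (0 : S) = -∑ a, b a * pderiv 2 (F a.succ.succ) := (congrFun hzero (Sum.inr 0)).symm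
  have hinl (k : Fin (n + 1)) :
      F k.castSucc * B k.castSucc = F (Fin.last (n + 1)) * B (Fin.last (n + 1)) :=
    sub_eq_zero.1 (congrFun hzero (Sum.inl k))
  have hrel : ∑ j, B j • grad (F j) = 0 := by
    simpa using (sum_smul_grad_add_smul_eq_zero_iff hx hy).2 ⟨b, hB, hinr⟩
  have hB0 : B = 0 :=
    eq_zero_of_sum_smul_grad_eq_zero hu (Fin.forall_fin_succ'.2 ⟨hinl, rfl⟩) hrel
  intro a
  rw [← (eq_sum_smul_gradRelation_iff.1 hB).2.2 a, hB0, Pi.zero_apply]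

end TwoLines

lemma sigz_eq_cross (f : S) : sigz f = grad f ⨯₃ ![0, 0, 1] := by
  simp [sigz, cross_apply, grad]

theorem kernel_caseL2_general
    (m : ℕ) (hm : 2 ≤ m) (F : Fin m → S) (hsq : Squarefree (∏ i, F i))
    {d : ℕ} (hhom : (∏ i, F i).IsHomogeneous d)
    (hF1 : F ⟨0, by omega⟩ = X 0) (hF2 : F ⟨1, by omega⟩ = X 1) :
    {A : (Fin (m - 1) ⊕ Fin 1) → S |
        (∑ j : Fin (m - 1), A (Sum.inl j) • rho F (Fin.castLE (Nat.sub_le m 1) j))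
          + A (Sum.inr 0) • sigz (∏ i, F i) = 0}
      = (Submodule.span S (Set.range (Rvec2 F)) : Set ((Fin (m - 1) ⊕ Fin 1) → S)) ∧
    LinearIndependent S (Rvec2 F) := by
  obtain ⟨n, rfl⟩ : ∃ n, m = n + 2 := ⟨m - 2, by omega⟩
  have hd : d ≠ 0 := by
    have hX : (X 0 : S) ∣ ∏ i, F i := hF1 ▸ Finset.dvd_prod_of_mem F (Finset.mem_univ _)
    have hdeg := totalDegree_le_of_dvd_of_isDomain hX hsq.ne_zero
    rw [totalDegree_X, hhom.totalDegree hsq.ne_zero] at hdeg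
    exact Nat.one_le_iff_ne_zero.1 hdeg
  have hu : IsRelPrimeFamily (grad (∏ i, F i)) := isRelPrimeFamily_pderiv hsq hhom hd
  refine ⟨?_, linearIndependent_Rvec2 hu hF1 hF2⟩
  ext A
  rw [Set.mem_ofPred_eq, SetLike.mem_coe, sigz_eq_cross, ← map_smul]
  exact (sum_castSucc_smul_rho_add_cross_eq_zero_iff hu).trans
    (mem_span_range_Rvec2_iff hF1 hF2).symm

/-- if `ℓ(C) = 2` with `f_1 = x`, `f_2 = y`, the kernel of
`φ : S^m → S³`, `φ(A_1,…,A_{m−1},c) = Σ A_j ρ_j + c σ^z`,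
is the free `S`-module with basis `R_3, …, R_m`. -/
theorem kernel_caseL2
    (m : ℕ) (hm : 4 ≤ m) (F : Fin m → S) (e : Fin m → ℕ)
    (he : ∀ j, 1 ≤ e j)
    (hhom : ∀ j, (F j).IsHomogeneous (e j))
    (hsmooth : ∀ j, ∀ p : Fin 3 → ℂ,
      (∀ t, eval p (pderiv t (F j)) = 0) → p = 0)
    (hnc : ∀ i j : Fin m, i ≠ j → ∀ p : Fin 3 → ℂ, p ≠ 0 →
      eval p (F i) = 0 → eval p (F j) = 0 →
      LinearIndependent ℂ
        ![fun t => eval p (pderiv t (F i)), fun t => eval p (pderiv t (F j))])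
    (htriple : ∀ i j k : Fin m, i ≠ j → i ≠ k → j ≠ k → ∀ p : Fin 3 → ℂ, p ≠ 0 →
      ¬(eval p (F i) = 0 ∧ eval p (F j) = 0 ∧ eval p (F k) = 0))
    (hF1 : F ⟨0, by omega⟩ = X 0) (hF2 : F ⟨1, by omega⟩ = X 1)
    (he1 : e ⟨0, by omega⟩ = 1) (he2 : e ⟨1, by omega⟩ = 1)
    (hl2 : ∀ j : Fin m, 2 ≤ (j : ℕ) → 2 ≤ e j) :
    {A : (Fin (m - 1) ⊕ Fin 1) → S |
        (∑ j : Fin (m - 1), A (Sum.inl j) • rho F (Fin.castLE (Nat.sub_le m 1) j))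
          + A (Sum.inr 0) • sigz (∏ i, F i) = 0}
      = (Submodule.span S (Set.range (Rvec2 F)) : Set ((Fin (m - 1) ⊕ Fin 1) → S)) ∧
    LinearIndependent S (Rvec2 F) := by
  exact kernel_caseL2_general m (by omega) F
    (squarefree_prod_of_smooth_of_normalCrossing hsmooth hnc)
    (IsHomogeneous.prod _ _ _ fun j _ => hhom j) hF1 hF2
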